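/- arXiv:0802.2865 — 2 statements merged into one kernel-verified Lean document; each statement's English description precedes it below -/
import Mathlib

section
/- Let ι be a finite type, V = (ι → ZMod 2), and let U ≤ W be submodules of V with finrank W = finrank U + β for a natural number β. Let s : Set ι and let π : V →ₗ[ZMod 2] ({i // i ∈ s} → ZMod 2) be the linear map restricting a vector to the coordinates in s. Then there exists w ∈ W with w ∉ U and w i = 0 for all i ∈ s, if and only if finrank (W.map π) ≠ finrank (U.map π) + β. -/
/-!
By rank–nullity, `finrank W - finrank (W.map f) = finrank (W ⊓ ker f)`, and likewise for `U`. Hence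
passing to images under `f` preserves the codimension `β` of `U` in `W` exactly when `U ⊓ ker f`
and `W ⊓ ker f` have the same dimension, that is, when every element of `W` killed by `f` lies
in `U`.
-/

section

open Module

variable {K E F : Type*} [DivisionRing K] [AddCommGroup E] [Module K E] [AddCommGroup F]
  [Module K F]

theorem finrank_map_add_finrank_inf_ker (f : E →ₗ[K] F) (W : Submodule K E)
    [FiniteDimensional K W] :
    finrank K (W.map f) + finrank K ↥(W ⊓ LinearMap.ker f) = finrank K W := by
  rw [← LinearMap.range_domRestrict, ← Submodule.map_comap_subtype,
    Submodule.finrank_map_subtype_eq, ← LinearMap.ker_domRestrict,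
    LinearMap.finrank_range_add_finrank_ker]

theorem finrank_inf_eq_finrank_inf_iff_inf_le {U W : Submodule K E} [FiniteDimensional K W]
    (hUW : U ≤ W) (N : Submodule K E) :
    finrank K ↥(U ⊓ N) = finrank K ↥(W ⊓ N) ↔ W ⊓ N ≤ U := by
  have hle : U ⊓ N ≤ W ⊓ N := inf_le_inf_right N hUW
  constructor
  · intro hfinrank
    exact (Submodule.eq_of_le_of_finrank_eq hle hfinrank).ge.trans inf_le_left
  · intro hWN
    rw [hle.antisymm (le_inf hWN inf_le_right)]

theorem finrank_map_eq_finrank_map_add_iff_inf_ker_le {U W : Submodule K E}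
    [FiniteDimensional K W] (hUW : U ≤ W) {β : ℕ} (hrank : finrank K W = finrank K U + β)
    (f : E →ₗ[K] F) :
    finrank K (W.map f) = finrank K (U.map f) + β ↔ W ⊓ LinearMap.ker f ≤ U := by
  have : FiniteDimensional K U := Submodule.finiteDimensional_of_le hUW
  have hW := finrank_map_add_finrank_inf_ker f W
  have hU := finrank_map_add_finrank_inf_ker f U
  rw [← finrank_inf_eq_finrank_inf_iff_inf_le hUW]
  omega

theorem exists_nonbounding_cycle_iff_rank_ne_general {U W : Submodule K E}
    [FiniteDimensional K W] (hUW : U ≤ W) {β : ℕ} (hrank : finrank K W = finrank K U + β)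
    (f : E →ₗ[K] F) :
    (∃ w ∈ W, w ∉ U ∧ f w = 0) ↔ finrank K (W.map f) ≠ finrank K (U.map f) + β := by
  rw [ne_eq, finrank_map_eq_finrank_map_add_iff_inf_ker_le hUW hrank, SetLike.not_le_iff_exists]
  simp only [Submodule.mem_inf, LinearMap.mem_ker, and_assoc, and_comm (a := _ ∉ U)]

end

/-- Rank test for carrying a nonbounding cycle: with `U ≤ W` submodules of
`(ι → ZMod 2)` with `finrank W = finrank U + β`, and `π` the restriction of vectors
to the coordinates in `s`, there exists `w ∈ W` with `w ∉ U` vanishing on all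
coordinates in `s` if and only if `finrank (W.map π) ≠ finrank (U.map π) + β`. -/
theorem exists_nonbounding_cycle_iff_rank_ne
    {ι : Type*} [Fintype ι] (β : ℕ)
    (U W : Submodule (ZMod 2) (ι → ZMod 2)) (hUW : U ≤ W)
    (hrank : Module.finrank (ZMod 2) W = Module.finrank (ZMod 2) U + β)
    (s : Set ι)
    (π : (ι → ZMod 2) →ₗ[ZMod 2] ({i // i ∈ s} → ZMod 2))
    (hπ : ∀ (v : ι → ZMod 2) (i : {i // i ∈ s}), π v i = v i) :
    (∃ w ∈ W, w ∉ U ∧ ∀ i ∈ s, w i = 0) ↔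
      Module.finrank (ZMod 2) (W.map π) ≠ Module.finrank (ZMod 2) (U.map π) + β := by
  simpa [funext_iff, hπ] using exists_nonbounding_cycle_iff_rank_ne_general hUW hrank π
end

section
/- There exist a metric space X, a family 𝒞 of nonempty bounded subsets of X, a set z_r ∈ 𝒞 with rad(z_r) ≤ rad(S) for all S ∈ 𝒞 (where rad(S) = ⨅_{p ∈ X} ⨆_{q ∈ S} dist p q), and a set z_d ∈ 𝒞 with Metric.diam z_d ≤ Metric.diam S for all S ∈ 𝒞, such that 0 < Metric.diam z_d and Metric.diam z_r = 2 * Metric.diam z_d. -/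
/-- The radius of a subset `S` of a metric space: the infimum over centers `p` of the
supremum over `q ∈ S` of `dist p q`. -/
noncomputable def setRad {X : Type*} [MetricSpace X] (S : Set X) : ℝ :=
  ⨅ p : X, ⨆ q ∈ S, dist p q

/-!
Model the annulus by the cylinder `AddCircle T × ℝ` with the sup metric, and let `𝒞` consist of the
loops winding once around it. Such a loop passes over every point of the circle, in particular over
the antipode of any prospective center, so its radius, and hence its diameter, is at least `T / 2`.
The loop at height `0` has diameter exactly `T / 2`. The loop oscillating between the heights
`-T / 2` and `T / 2` still lies in the ball of radius `T / 2` about the origin, so its radius is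
minimal, but its diameter is `T`.
-/

open Set Bornology Metric

section Radius

theorem dist_le_iSup_dist_of_mem {X : Type*} [PseudoMetricSpace X] {S : Set X} {p q : X}
    (hS : IsBounded S) (hq : q ∈ S) : dist p q ≤ ⨆ q ∈ S, dist p q := by
  obtain ⟨R, hR⟩ := hS.subset_closedBall p
  have hR₀ : 0 ≤ R := dist_nonneg.trans (hR hq)
  have hbdd : BddAbove (range fun q ↦ ⨆ _ : q ∈ S, dist p q) := by
    refine ⟨R, ?_⟩
    rintro _ ⟨q, rfl⟩
    exact Real.iSup_le (fun hq ↦ mem_closedBall'.1 (hR hq)) hR₀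
  exact le_ciSup_of_le hbdd q (ciSup_pos (f := fun _ ↦ dist p q) hq).ge

variable {X : Type*} [MetricSpace X] {S : Set X} {p : X} {r : ℝ}

theorem setRad_le_of_subset_closedBall (hr : 0 ≤ r) (h : S ⊆ closedBall p r) : setRad S ≤ r := by
  have hbdd : BddBelow (range fun p : X ↦ ⨆ q ∈ S, dist p q) := by
    refine ⟨0, ?_⟩
    rintro _ ⟨p, rfl⟩
    exact Real.iSup_nonneg fun q ↦ Real.iSup_nonneg fun _ ↦ dist_nonneg
  exact ciInf_le_of_le hbdd p <|
    Real.iSup_le (fun q ↦ Real.iSup_le (fun hq ↦ mem_closedBall'.1 (h hq)) hr) hr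

theorem setRad_le_diam (hne : S.Nonempty) (hS : IsBounded S) : setRad S ≤ diam S := by
  obtain ⟨p, hp⟩ := hne
  exact setRad_le_of_subset_closedBall diam_nonneg fun q hq ↦ dist_le_diam_of_mem hS hq hp

theorem le_setRad [Nonempty X] (hS : IsBounded S) (h : ∀ p, ∃ q ∈ S, r ≤ dist p q) :
    r ≤ setRad S := by
  refine le_ciInf fun p ↦ ?_
  obtain ⟨q, hq, hrq⟩ := h p
  exact hrq.trans (dist_le_iSup_dist_of_mem hS hq)

end Radius

section WindingOneLoop

/-- `S` is the trace of a loop in the cylinder `AddCircle T × F` that winds once around the circle.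
The loop is given on `[0, 1]` by a lift `θ` of its circle coordinate to `ℝ`, which gains one period,
and by its height `h`. -/
def IsWindingOneLoop {T : ℝ} {F : Type*} [TopologicalSpace F] (S : Set (AddCircle T × F)) : Prop :=
  ∃ (θ : ℝ → ℝ) (h : ℝ → F), ContinuousOn θ (Icc 0 1) ∧ ContinuousOn h (Icc 0 1) ∧
    θ 1 = θ 0 + T ∧ h 1 = h 0 ∧ S = (fun t ↦ ((θ t : AddCircle T), h t)) '' Icc 0 1

namespace IsWindingOneLoop

variable {T : ℝ} {F : Type*} [TopologicalSpace F] {S : Set (AddCircle T × F)}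

theorem nonempty (hS : IsWindingOneLoop S) : S.Nonempty := by
  obtain ⟨θ, h, -, -, -, -, rfl⟩ := hS
  exact (nonempty_Icc.2 zero_le_one).image _

theorem isCompact (hS : IsWindingOneLoop S) : IsCompact S := by
  obtain ⟨θ, h, hθ, hh, -, -, rfl⟩ := hS
  exact isCompact_Icc.image_of_continuousOn <|
    ((AddCircle.continuous_mk' T).comp_continuousOn hθ).prodMk hh

theorem image_fst_eq_univ [Fact (0 < T)] (hS : IsWindingOneLoop S) : Prod.fst '' S = univ := by
  obtain ⟨θ, h, hθ, -, hperiod, -, rfl⟩ := hS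
  have hIcc : Icc (θ 0) (θ 0 + T) ⊆ θ '' Icc 0 1 :=
    hperiod ▸ intermediate_value_Icc zero_le_one hθ
  rw [image_image, ← image_image (fun x : ℝ ↦ (x : AddCircle T)) θ, ← univ_subset_iff,
    ← AddCircle.coe_image_Icc_eq T (θ 0)]
  exact image_mono hIcc

end IsWindingOneLoop

end WindingOneLoop

section Cylinder

theorem dist_addCircle_le_half_period {T : ℝ} [hT : Fact (0 < T)] (x y : AddCircle T) :
    dist x y ≤ T / 2 := by
  rw [dist_eq_norm]
  exact (AddCircle.norm_le_half_period T hT.out.ne').trans_eq (by rw [abs_of_pos hT.out])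

variable {T : ℝ} {F : Type*} [MetricSpace F] {S : Set (AddCircle T × F)}

theorem half_period_le_setRad_of_image_fst_eq_univ (hS : IsBounded S)
    (hfst : Prod.fst '' S = univ) : T / 2 ≤ setRad S := by
  have surj (x : AddCircle T) : ∃ q ∈ S, q.1 = x := hfst.ge (mem_univ x)
  obtain ⟨q₀, -⟩ := surj 0
  have : Nonempty (AddCircle T × F) := ⟨q₀⟩
  refine le_setRad hS fun p ↦ ?_
  obtain ⟨q, hq, hantipode⟩ := surj (p.1 + ↑(T / 2))
  refine ⟨q, hq, ?_⟩
  calc T / 2 ≤ |T| / 2 := by gcongr; exact le_abs_self T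
    _ = dist p.1 q.1 := by rw [hantipode, dist_self_add_right, AddCircle.norm_half_period_eq]
    _ ≤ dist p q := le_max_left _ _

namespace IsWindingOneLoop

variable [Fact (0 < T)]

theorem half_period_le_setRad (hS : IsWindingOneLoop S) : T / 2 ≤ setRad S :=
  half_period_le_setRad_of_image_fst_eq_univ hS.isCompact.isBounded hS.image_fst_eq_univ

theorem half_period_le_diam (hS : IsWindingOneLoop S) : T / 2 ≤ diam S :=
  hS.half_period_le_setRad.trans (setRad_le_diam hS.nonempty hS.isCompact.isBounded)

end IsWindingOneLoop

end Cylinder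

section SineLoop

/-- The trace of one period of a sine wave of amplitude `A` wrapped around the cylinder; the
amplitude `0` gives the horizontal circle. -/
def sineLoop (T A : ℝ) : Set (AddCircle T × ℝ) :=
  (fun t : ℝ ↦ (((T * t : ℝ) : AddCircle T), A * Real.sin (2 * Real.pi * t))) '' Icc 0 1

variable (T A : ℝ)

theorem isWindingOneLoop_sineLoop : IsWindingOneLoop (sineLoop T A) :=
  ⟨fun t ↦ T * t, fun t ↦ A * Real.sin (2 * Real.pi * t), by fun_prop, by fun_prop, by simp,
    by simp, rfl⟩

variable {T A} in
theorem abs_snd_le_of_mem_sineLoop {q : AddCircle T × ℝ} (hq : q ∈ sineLoop T A) :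
    |q.2| ≤ |A| := by
  obtain ⟨t, -, rfl⟩ := hq
  rw [abs_mul]
  exact mul_le_of_le_one_right (abs_nonneg A) (Real.abs_sin_le_one _)

theorem two_mul_abs_le_diam_sineLoop : 2 * |A| ≤ diam (sineLoop T A) := by
  have hcrest : (((T * (1 / 4) : ℝ) : AddCircle T), A) ∈ sineLoop T A := by
    refine ⟨1 / 4, by norm_num, ?_⟩
    beta_reduce
    rw [show 2 * Real.pi * (1 / 4) = Real.pi / 2 by ring, Real.sin_pi_div_two, mul_one]
  have htrough : (((T * (3 / 4) : ℝ) : AddCircle T), -A) ∈ sineLoop T A := by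
    refine ⟨3 / 4, by norm_num, ?_⟩
    beta_reduce
    rw [show 2 * Real.pi * (3 / 4) = Real.pi / 2 + Real.pi by ring, Real.sin_add_pi,
      Real.sin_pi_div_two, mul_neg_one]
  calc 2 * |A| = dist A (-A) := by
        rw [Real.dist_eq, sub_neg_eq_add, ← two_mul, abs_mul, abs_two]
    _ ≤ dist (((T * (1 / 4) : ℝ) : AddCircle T), A) (((T * (3 / 4) : ℝ) : AddCircle T), -A) :=
        le_max_right _ _
    _ ≤ diam (sineLoop T A) :=
        dist_le_diam_of_mem (isWindingOneLoop_sineLoop T A).isCompact.isBounded hcrest htrough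

variable [Fact (0 < T)]

theorem diam_sineLoop : diam (sineLoop T A) = max (T / 2) (2 * |A|) := by
  refine le_antisymm (diam_le_of_forall_dist_le (by positivity) fun p hp q hq ↦ ?_) <|
    max_le (isWindingOneLoop_sineLoop T A).half_period_le_diam (two_mul_abs_le_diam_sineLoop T A)
  refine max_le_max (dist_addCircle_le_half_period p.1 q.1) ?_
  calc dist p.2 q.2 ≤ |p.2| + |q.2| := abs_sub _ _
    _ ≤ |A| + |A| := add_le_add (abs_snd_le_of_mem_sineLoop hp) (abs_snd_le_of_mem_sineLoop hq)
    _ = 2 * |A| := (two_mul _).symm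

theorem setRad_sineLoop_le : setRad (sineLoop T A) ≤ max (T / 2) |A| := by
  refine setRad_le_of_subset_closedBall (p := 0) (by positivity) fun q hq ↦ ?_
  refine max_le_max (dist_addCircle_le_half_period q.1 0) ?_
  simpa using abs_snd_le_of_mem_sineLoop hq

end SineLoop

/-- Tightness of the bound `diam z_r ≤ 2 * diam z_d`: there are a metric space, a
family `𝒞` of nonempty bounded subsets, a minimal-radius member `z_r` and a
minimal-diameter member `z_d` with `0 < diam z_d` and `diam z_r = 2 * diam z_d`. -/
theorem exists_diam_minRadius_eq_two_mul_diam_minDiam :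
    ∃ (X : Type) (_ : MetricSpace X) (𝒞 : Set (Set X)) (zr zd : Set X),
      (∀ S ∈ 𝒞, S.Nonempty ∧ Bornology.IsBounded S) ∧
      zr ∈ 𝒞 ∧ zd ∈ 𝒞 ∧
      (∀ S ∈ 𝒞, setRad zr ≤ setRad S) ∧
      (∀ S ∈ 𝒞, Metric.diam zd ≤ Metric.diam S) ∧
      0 < Metric.diam zd ∧
      Metric.diam zr = 2 * Metric.diam zd := by
  have rad_zr : setRad (sineLoop 1 (1 / 2)) ≤ 1 / 2 :=
    (setRad_sineLoop_le 1 (1 / 2)).trans_eq (by norm_num)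
  have diam_zr : diam (sineLoop 1 (1 / 2)) = 1 := by rw [diam_sineLoop]; norm_num
  have diam_zd : diam (sineLoop 1 0) = 1 / 2 := by rw [diam_sineLoop]; norm_num
  refine ⟨AddCircle (1 : ℝ) × ℝ, inferInstance, {S | IsWindingOneLoop S}, sineLoop 1 (1 / 2),
    sineLoop 1 0, ?_, isWindingOneLoop_sineLoop 1 (1 / 2), isWindingOneLoop_sineLoop 1 0, ?_, ?_,
    ?_, ?_⟩
  · exact fun S hS ↦ ⟨hS.nonempty, hS.isCompact.isBounded⟩
  · exact fun S hS ↦ rad_zr.trans hS.half_period_le_setRad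
  · exact fun S hS ↦ diam_zd.trans_le hS.half_period_le_diam
  · rw [diam_zd]; norm_num
  · rw [diam_zr, diam_zd]; norm_num
end
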